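/- Let X be a finite set of points in a metric space, ε > 0, and MinPts a natural number. For a core point p of X, let R(p) denote the set of points of X that are density-reachable from p. If p and q are core points and q ∈ R(p), then R(p) = R(q); consequently, if the sets of density-reachable points of two core points intersect in a core point, the two sets coincide. -/

import Mathlib

/-! Density-reachability is reflexive and transitive by construction. Towards a core point it is
also symmetric (`DensityReachable.symm_of_core`), so a core point reachable from `p` reaches exactly
the points that `p` does. A core point common to two reachable sets therefore has the same
reachable set as both starting points. -/

/-- `p` is a core point of `X` with respect to `(ε, MinPts)`. -/
noncomputable def IsCorePt {α : Type*} [MetricSpace α] (X : Finset α) (ε : ℝ) (MinPts : ℕ)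
    (p : α) : Prop :=
  MinPts ≤ (X.filter (fun q => dist p q ≤ ε)).card

/-- `b` is directly density-reachable from `a` in `X` w.r.t. `(ε, MinPts)`. -/
noncomputable def DirectlyDR {α : Type*} [MetricSpace α] (X : Finset α) (ε : ℝ) (MinPts : ℕ)
    (a b : α) : Prop :=
  a ∈ X ∧ b ∈ X ∧ IsCorePt X ε MinPts a ∧ dist a b ≤ ε

/-- `b` is density-reachable from `a`: a finite chain of directly
density-reachable steps leads from `a` to `b`. -/
noncomputable def DensityReachable {α : Type*} [MetricSpace α] (X : Finset α) (ε : ℝ)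
    (MinPts : ℕ) (a b : α) : Prop :=
  Relation.ReflTransGen (DirectlyDR X ε MinPts) a b

/-- The set `R(p)` of points density-reachable from `p`. -/
noncomputable def reachSet {α : Type*} [MetricSpace α] (X : Finset α) (ε : ℝ) (MinPts : ℕ)
    (p : α) : Set α :=
  {x | DensityReachable X ε MinPts p x}

/-- Every point of a chain except possibly the last is core, being the source of a step. If the
last point is core as well, each step can be reversed, since `dist` is symmetric. -/
theorem DensityReachable.symm_of_core {α : Type*} [MetricSpace α] {X : Finset α} {ε : ℝ}
    {MinPts : ℕ} {a b : α} (h : DensityReachable X ε MinPts a b) (hb : IsCorePt X ε MinPts b) :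
    DensityReachable X ε MinPts b a := by
  unfold DensityReachable at h ⊢
  induction h with
  | refl => exact .refl
  | tail _ hstep ih =>
    obtain ⟨hx, hy, hcore, hd⟩ := hstep
    exact .head ⟨hy, hx, hb, by rwa [dist_comm]⟩ (ih hcore)

theorem reachSet_eq_of_mem {α : Type*} [MetricSpace α] {X : Finset α} {ε : ℝ}
    {MinPts : ℕ} {p q : α} (hq : IsCorePt X ε MinPts q) (h : q ∈ reachSet X ε MinPts p) :
    reachSet X ε MinPts p = reachSet X ε MinPts q := by
  ext x
  exact ⟨fun hx => Relation.ReflTransGen.trans (DensityReachable.symm_of_core h hq) hx,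
    fun hx => Relation.ReflTransGen.trans h hx⟩

/-- If `p` and `q` are core points of `X` and
`q ∈ R(p)`, then `R(p) = R(q)`; consequently, if the sets of
density-reachable points of two core points intersect in a core point, the
two sets coincide. -/
theorem reachSet_eq_of_core_mem {α : Type*} [MetricSpace α]
    (X : Finset α) (ε : ℝ) (hε : 0 < ε) (MinPts : ℕ) :
    (∀ p q : α, p ∈ X → q ∈ X →
      IsCorePt X ε MinPts p → IsCorePt X ε MinPts q →
      q ∈ reachSet X ε MinPts p →
      reachSet X ε MinPts p = reachSet X ε MinPts q) ∧
    (∀ p q c : α, p ∈ X → q ∈ X →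
      IsCorePt X ε MinPts p → IsCorePt X ε MinPts q → IsCorePt X ε MinPts c →
      c ∈ reachSet X ε MinPts p ∩ reachSet X ε MinPts q →
      reachSet X ε MinPts p = reachSet X ε MinPts q) := by
  exact ⟨fun _ _ _ _ _ hq h => reachSet_eq_of_mem hq h,
    fun _ _ _ _ _ _ _ hc h =>
      (reachSet_eq_of_mem hc h.1).trans (reachSet_eq_of_mem hc h.2).symm⟩
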